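/- Let n ≥ 2 and let −L, G be the Dirichlet MAC matrices, and let S := Gᵀ·(−L)⁻¹·G be the n²×n² Schur complement. Then the eigenspace of S for the eigenvalue 1 has dimension at least n² − 4(n−1); equivalently, at most 4(n−1) eigenvalues of S (counted with multiplicity) are different from 1. -/

import Mathlib

/-! Write `B = BD n`. Then `TD = Bᵀ B` and `TE = B Bᵀ + 2 E0` (`TD_eq`, `TE_eq`), so the discrete
Laplacian commutes with the discrete gradient up to a boundary term (`negL_mul_Gmac`):
`(-L) G = G (Gᵀ G) + 2 R`, where the two row blocks of `R` are `E0 ⊗ Bᵀ` and `Bᵀ ⊗ E0`.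
If a cell vector `q` vanishes on the boundary cells then `R q = 0`, hence
`(-L)⁻¹ G (Gᵀ G q) = G q` and `S (Gᵀ G q) = Gᵀ G q`: the vector `Gᵀ G q` lies in the eigenspace
for the eigenvalue `1`. Here `-L` is invertible because `TD` is positive definite and `TE` positive
semidefinite (`negL_det_isUnit`).
Finally `q ↦ Gᵀ G q` is injective on such `q`: `Gᵀ G q = 0` forces `G q = 0`, so `q` is constant on
every line of cells with fixed first index and equal to its boundary value `0`
(`eq_zero_of_Gmac_mulVec`). As there are `(n-2)² = n² - 4(n-1)` interior cells, the bound
follows. -/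

open Matrix Kronecker

/-- `(n-1)×(n-1)` tridiagonal matrix with `2` on the diagonal and `-1` on the sub/super-diagonal. -/
noncomputable def TD (n : ℕ) : Matrix (Fin (n - 1)) (Fin (n - 1)) ℝ := fun i j =>
  if i = j then 2 else if (i : ℕ) + 1 = (j : ℕ) ∨ (j : ℕ) + 1 = (i : ℕ) then -1 else 0

/-- `n×n` tridiagonal matrix with diagonal `(3,2,…,2,3)` and `-1` on the sub/super-diagonal. -/
noncomputable def TE (n : ℕ) : Matrix (Fin n) (Fin n) ℝ := fun i j =>
  if i = j then (if (i : ℕ) = 0 ∨ (i : ℕ) = n - 1 then 3 else 2)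
  else if (i : ℕ) + 1 = (j : ℕ) ∨ (j : ℕ) + 1 = (i : ℕ) then -1 else 0

/-- `n×n` diagonal matrix `diag(1,0,…,0,1)`. -/
noncomputable def E0 (n : ℕ) : Matrix (Fin n) (Fin n) ℝ := fun i j =>
  if i = j ∧ ((i : ℕ) = 0 ∨ (i : ℕ) = n - 1) then 1 else 0

/-- `n×(n-1)` bidiagonal matrix with `(B_D)_{i,i} = -1`, `(B_D)_{i+1,i} = 1`. -/
noncomputable def BD (n : ℕ) : Matrix (Fin n) (Fin (n - 1)) ℝ := fun i j =>
  if (i : ℕ) = (j : ℕ) then -1 else if (i : ℕ) = (j : ℕ) + 1 then 1 else 0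

/-- Discrete negative vector Laplacian of the Dirichlet MAC discretization
(`h = 1`, `μ = 1`). -/
noncomputable def negL (n : ℕ) :
    Matrix ((Fin n × Fin (n - 1)) ⊕ (Fin (n - 1) × Fin n))
      ((Fin n × Fin (n - 1)) ⊕ (Fin (n - 1) × Fin n)) ℝ :=
  Matrix.fromBlocks
    ((1 : Matrix (Fin n) (Fin n) ℝ) ⊗ₖ TD n + TE n ⊗ₖ (1 : Matrix (Fin (n - 1)) (Fin (n - 1)) ℝ))
    0 0
    ((1 : Matrix (Fin (n - 1)) (Fin (n - 1)) ℝ) ⊗ₖ TE n + TD n ⊗ₖ (1 : Matrix (Fin n) (Fin n) ℝ))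

/-- Discrete gradient of the Dirichlet MAC discretization: `I_n ⊗ B_Dᵀ` stacked on top of
`B_Dᵀ ⊗ I_n`. -/
noncomputable def Gmac (n : ℕ) :
    Matrix ((Fin n × Fin (n - 1)) ⊕ (Fin (n - 1) × Fin n)) (Fin n × Fin n) ℝ :=
  Matrix.fromRows ((1 : Matrix (Fin n) (Fin n) ℝ) ⊗ₖ (BD n)ᵀ)
    ((BD n)ᵀ ⊗ₖ (1 : Matrix (Fin n) (Fin n) ℝ))

lemma BD_transpose_mulVec (n : ℕ) (r : Fin n → ℝ) (j : Fin (n - 1)) :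
    ((BD n)ᵀ *ᵥ r) j = r ⟨j + 1, by omega⟩ - r ⟨j, by omega⟩ := by
  have h : ∀ x : Fin n, (BD n)ᵀ j x * r x
      = (if x = ⟨j + 1, by omega⟩ then r x else 0) - (if x = ⟨j, by omega⟩ then r x else 0) := by
    intro x
    simp only [transpose_apply, BD, Fin.ext_iff]
    split_ifs <;> first | omega | simp
  simp only [mulVec, dotProduct, h, Finset.sum_sub_distrib, Finset.sum_ite_eq', Finset.mem_univ,
    if_true]

lemma BD_mulVec (n : ℕ) (v : Fin (n - 1) → ℝ) (i : Fin n) :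
    (BD n *ᵥ v) i = (if h : 0 < (i : ℕ) then v ⟨i - 1, by omega⟩ else 0)
      - (if h : (i : ℕ) < n - 1 then v ⟨i, h⟩ else 0) := by
  have h : ∀ x : Fin (n - 1), BD n i x * v x
      = (if (i : ℕ) = x + 1 then v x else 0) - (if (i : ℕ) = x then v x else 0) := by
    intro x
    simp only [BD]
    split_ifs <;> first | omega | simp
  simp only [mulVec, dotProduct, h, Finset.sum_sub_distrib]
  congr 1
  · split_ifs with h0
    · rw [Finset.sum_eq_single ⟨i - 1, by omega⟩]
      · rw [if_pos]
        simp only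
        omega
      · intro b _ hb
        rw [if_neg]
        simp only [ne_eq, Fin.ext_iff] at hb
        omega
      · simp
    · exact Finset.sum_eq_zero fun x _ => if_neg (by omega)
  · split_ifs with h0
    · rw [Finset.sum_eq_single ⟨i, h0⟩]
      · simp
      · intro b _ hb
        rw [if_neg]
        simp only [ne_eq, Fin.ext_iff] at hb
        omega
      · simp
    · exact Finset.sum_eq_zero fun x _ => if_neg (by omega)

lemma TD_eq (n : ℕ) : TD n = (BD n)ᵀ * BD n := by
  ext i j
  have : ((BD n)ᵀ * BD n) i j = ((BD n)ᵀ *ᵥ fun k => BD n k j) i := rfl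
  rw [this, BD_transpose_mulVec]
  simp only [TD, BD, Fin.ext_iff]
  split_ifs <;> first | omega | norm_num

lemma TE_eq (n : ℕ) (hn : 2 ≤ n) : TE n = BD n * (BD n)ᵀ + (2 : ℝ) • E0 n := by
  ext i j
  have : (BD n * (BD n)ᵀ) i j = (BD n *ᵥ fun k => BD n j k) i := rfl
  rw [Matrix.add_apply, this, BD_mulVec]
  simp only [TE, E0, BD, Fin.ext_iff, Matrix.smul_apply, smul_eq_mul]
  have hi := i.2
  have hj := j.2
  split_ifs <;> first | omega | norm_num

lemma BD_mulVec_injective (n : ℕ) : Function.Injective (BD n).mulVec := by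
  suffices H : ∀ v, BD n *ᵥ v = 0 → v = 0 by
    intro v w h
    exact sub_eq_zero.1 (H _ (by rw [mulVec_sub]; exact sub_eq_zero.2 h))
  intro v hv
  have key : ∀ k (hk : k < n - 1), v ⟨k, hk⟩ = 0 := by
    intro k
    induction k with
    | zero =>
      intro hk
      have := congrFun hv ⟨0, by omega⟩
      rw [BD_mulVec] at this
      simpa [hk] using this
    | succ k ih =>
      intro hk
      have := congrFun hv ⟨k + 1, by omega⟩
      rw [BD_mulVec] at this
      simpa [hk, ih (by omega)] using this
  ext i
  exact key i i.2

lemma TD_posDef (n : ℕ) : (TD n).PosDef := by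
  have := Matrix.PosDef.conjTranspose_mul_self (BD n) (BD_mulVec_injective n)
  rwa [conjTranspose_eq_transpose_of_trivial, ← TD_eq] at this

lemma E0_posSemidef (n : ℕ) : (E0 n).PosSemidef := by
  have : E0 n = diagonal fun i : Fin n => if (i : ℕ) = 0 ∨ (i : ℕ) = n - 1 then (1 : ℝ) else 0 := by
    ext i j
    simp only [E0, diagonal_apply]
    split_ifs <;> first | rfl | tauto
  rw [this]
  refine PosSemidef.diagonal fun i => ?_
  simp only [Pi.zero_apply]
  split_ifs <;> norm_num

lemma TE_posSemidef (n : ℕ) (hn : 2 ≤ n) : (TE n).PosSemidef := by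
  rw [TE_eq n hn]
  have := Matrix.posSemidef_self_mul_conjTranspose (BD n)
  rw [conjTranspose_eq_transpose_of_trivial] at this
  exact this.add ((E0_posSemidef n).smul (by norm_num))

lemma negL_det_isUnit (n : ℕ) (hn : 2 ≤ n) : IsUnit (negL n).det := by
  rw [negL, det_fromBlocks_zero₂₁]
  refine IsUnit.mul ?_ ?_
  · exact ((PosDef.kronecker PosDef.one (TD_posDef n)).add_posSemidef
      (PosSemidef.kronecker (TE_posSemidef n hn) PosSemidef.one)).det_pos.ne'.isUnit
  · exact (PosDef.posSemidef_add (PosSemidef.kronecker PosSemidef.one (TE_posSemidef n hn))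
      (PosDef.kronecker (TD_posDef n) PosDef.one)).det_pos.ne'.isUnit

lemma Gmac_transpose_mul (n : ℕ) : (Gmac n)ᵀ * Gmac n
    = (1 : Matrix (Fin n) (Fin n) ℝ) ⊗ₖ (BD n * (BD n)ᵀ)
      + (BD n * (BD n)ᵀ) ⊗ₖ (1 : Matrix (Fin n) (Fin n) ℝ) := by
  rw [Gmac, transpose_fromRows, fromCols_mul_fromRows, ← kroneckerMap_transpose,
    ← kroneckerMap_transpose, ← mul_kronecker_mul, ← mul_kronecker_mul]
  simp

/-- The discrete Laplacian commutes with the discrete gradient up to a boundary term. -/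
lemma negL_mul_Gmac (n : ℕ) (hn : 2 ≤ n) : negL n * Gmac n = Gmac n * ((Gmac n)ᵀ * Gmac n)
    + (2 : ℝ) • fromRows (E0 n ⊗ₖ (BD n)ᵀ) ((BD n)ᵀ ⊗ₖ E0 n) := by
  have e1 : negL n * Gmac n = fromRows
      ((1 : Matrix (Fin n) (Fin n) ℝ) ⊗ₖ ((BD n)ᵀ * BD n * (BD n)ᵀ)
        + (BD n * (BD n)ᵀ + (2 : ℝ) • E0 n) ⊗ₖ (BD n)ᵀ)
      ((BD n)ᵀ ⊗ₖ (BD n * (BD n)ᵀ + (2 : ℝ) • E0 n)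
        + ((BD n)ᵀ * BD n * (BD n)ᵀ) ⊗ₖ (1 : Matrix (Fin n) (Fin n) ℝ)) := by
    rw [negL, Gmac, fromBlocks_mul_fromRows, TD_eq, TE_eq n hn]
    simp only [Matrix.zero_mul, add_zero, zero_add, Matrix.add_mul (_ ⊗ₖ _) (_ ⊗ₖ _),
      ← mul_kronecker_mul, Matrix.one_mul, Matrix.mul_one]
  rw [e1, Gmac_transpose_mul, Gmac, fromRows_mul]
  simp only [Matrix.mul_add, ← mul_kronecker_mul, Matrix.one_mul, Matrix.mul_one,
    add_kronecker, kronecker_add, smul_kronecker, kronecker_smul, Matrix.mul_assoc]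
  ext (i | i) j
  · simp only [fromRows_apply_inl, Matrix.add_apply, Matrix.smul_apply]
    ring
  · simp only [fromRows_apply_inr, Matrix.add_apply, Matrix.smul_apply]
    ring

/-- A cell vector with zero discrete gradient that vanishes on the cells with second index
`0` is zero: the first block of `G` makes it constant along the second index. -/
lemma eq_zero_of_Gmac_mulVec (n : ℕ) (q : Fin n × Fin n → ℝ) (hG : Gmac n *ᵥ q = 0)
    (hq : ∀ i j : Fin n, (j : ℕ) = 0 → q (i, j) = 0) : q = 0 := by
  have step : ∀ (i : Fin n) (j : Fin (n - 1)),
      q (i, ⟨j + 1, by omega⟩) = q (i, ⟨j, by omega⟩) := by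
    intro i j
    have h1 := congrFun hG (Sum.inl (i, j))
    have h2 : (Gmac n *ᵥ q) (Sum.inl (i, j)) = ((BD n)ᵀ *ᵥ fun k => q (i, k)) j := by
      simp only [mulVec, dotProduct, Gmac, fromRows_apply_inl, kroneckerMap_apply,
        Fintype.sum_prod_type]
      rw [Finset.sum_eq_single i]
      · simp
      · intro b _ hb
        simp [Matrix.one_apply_ne hb.symm]
      · simp
    rw [h2, BD_transpose_mulVec] at h1
    exact sub_eq_zero.1 h1
  have key : ∀ (i : Fin n) k (hk : k < n), q (i, ⟨k, hk⟩) = 0 := by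
    intro i k
    induction k with
    | zero => exact fun hk => hq _ _ rfl
    | succ k ih => exact fun hk => (step i ⟨k, by omega⟩).trans (ih (by omega))
  ext ⟨i, j⟩
  exact key i j j.2

lemma boundary_term_mulVec (n : ℕ) (q : Fin n × Fin n → ℝ)
    (h1 : ∀ i j : Fin n, ((i : ℕ) = 0 ∨ (i : ℕ) = n - 1) → q (i, j) = 0)
    (h2 : ∀ i j : Fin n, ((j : ℕ) = 0 ∨ (j : ℕ) = n - 1) → q (i, j) = 0) :
    fromRows (E0 n ⊗ₖ (BD n)ᵀ) ((BD n)ᵀ ⊗ₖ E0 n) *ᵥ q = 0 := by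
  have hE : ∀ i j : Fin n, E0 n i j ≠ 0 → ((j : ℕ) = 0 ∨ (j : ℕ) = n - 1) := by
    intro i j h
    simp only [E0, ne_eq, ite_eq_right_iff, one_ne_zero, imp_false, not_not] at h
    exact h.1 ▸ h.2
  ext (⟨i, j⟩ | ⟨i, j⟩)
  · refine Finset.sum_eq_zero fun x _ => ?_
    simp only [fromRows_apply_inl, kroneckerMap_apply]
    by_cases h : E0 n i x.1 = 0
    · simp [h]
    · rw [show q x = 0 from h1 x.1 x.2 (hE _ _ h), mul_zero]
  · refine Finset.sum_eq_zero fun x _ => ?_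
    simp only [fromRows_apply_inr, kroneckerMap_apply]
    by_cases h : E0 n j x.2 = 0
    · simp [h]
    · rw [show q x = 0 from h2 x.1 x.2 (hE _ _ h), mul_zero]

/-- If `q` vanishes on the boundary cells, `Gᵀ G q` is fixed by the Schur complement. -/
lemma schur_mulVec_fixed (n : ℕ) (hn : 2 ≤ n) (q : Fin n × Fin n → ℝ)
    (h1 : ∀ i j : Fin n, ((i : ℕ) = 0 ∨ (i : ℕ) = n - 1) → q (i, j) = 0)
    (h2 : ∀ i j : Fin n, ((j : ℕ) = 0 ∨ (j : ℕ) = n - 1) → q (i, j) = 0) :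
    ((Gmac n)ᵀ * (negL n)⁻¹ * Gmac n) *ᵥ (((Gmac n)ᵀ * Gmac n) *ᵥ q)
      = ((Gmac n)ᵀ * Gmac n) *ᵥ q := by
  have h : (Gmac n * ((Gmac n)ᵀ * Gmac n)) *ᵥ q = (negL n * Gmac n) *ᵥ q := by
    rw [negL_mul_Gmac n hn, add_mulVec, smul_mulVec, boundary_term_mulVec n q h1 h2,
      smul_zero, add_zero]
  rw [mulVec_mulVec, Matrix.mul_assoc ((Gmac n)ᵀ * (negL n)⁻¹), ← mulVec_mulVec, h, mulVec_mulVec,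
    Matrix.mul_assoc, ← Matrix.mul_assoc (negL n)⁻¹, nonsing_inv_mul _ (negL_det_isUnit n hn),
    Matrix.one_mul]

/-- The inclusion of the interior cells into the `(m+2) × (m+2)` grid. -/
def interiorCell (m : ℕ) (x : Fin m × Fin m) : Fin (m + 2) × Fin (m + 2) :=
  (⟨x.1 + 1, by omega⟩, ⟨x.2 + 1, by omega⟩)

lemma interiorCell_injective (m : ℕ) : Function.Injective (interiorCell m) := by
  rintro ⟨a, b⟩ ⟨c, d⟩ h
  simp only [interiorCell, Prod.mk.injEq, Fin.ext_iff] at h ⊢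
  omega

lemma extend_interiorCell_boundary (m : ℕ) (v : Fin m × Fin m → ℝ) (x : Fin (m + 2) × Fin (m + 2))
    (hx : ((x.1 : ℕ) = 0 ∨ (x.1 : ℕ) = m + 2 - 1) ∨ ((x.2 : ℕ) = 0 ∨ (x.2 : ℕ) = m + 2 - 1)) :
    Function.ExtendByZero.linearMap ℝ (interiorCell m) v x = 0 := by
  rw [Function.ExtendByZero.linearMap_apply]
  refine Function.extend_apply' _ _ _ ?_
  rintro ⟨⟨a, b⟩, rfl⟩
  simp only [interiorCell] at hx
  omega

/-- the eigenspace of the Schur complement `S = Gᵀ (-L)⁻¹ G` for the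
eigenvalue `1` has dimension at least `n² - 4(n-1)`; equivalently at most `4(n-1)`
eigenvalues of `S` (with multiplicity) differ from `1`. -/
theorem stmt_13 (n : ℕ) (hn : 2 ≤ n) :
    n ^ 2 - 4 * (n - 1) ≤
      Module.finrank ℝ
        (Module.End.eigenspace ((Gmac n)ᵀ * (negL n)⁻¹ * Gmac n).mulVecLin 1) := by
  obtain ⟨m, rfl⟩ : ∃ m, n = m + 2 := ⟨n - 2, by omega⟩
  let e := Function.ExtendByZero.linearMap ℝ (interiorCell m)
  let f : (Fin m × Fin m → ℝ) →ₗ[ℝ] (Fin (m + 2) × Fin (m + 2) → ℝ) :=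
    ((Gmac (m + 2))ᵀ * Gmac (m + 2)).mulVecLin ∘ₗ e
  have hmem : ∀ v, f v ∈ Module.End.eigenspace
      ((Gmac (m + 2))ᵀ * (negL (m + 2))⁻¹ * Gmac (m + 2)).mulVecLin 1 := by
    intro v
    rw [Module.End.mem_eigenspace_iff, one_smul]
    exact schur_mulVec_fixed (m + 2) hn (e v)
      (fun i j h => extend_interiorCell_boundary m v (i, j) (Or.inl h))
      (fun i j h => extend_interiorCell_boundary m v (i, j) (Or.inr h))
  have hinj : Function.Injective f := by
    refine (injective_iff_map_eq_zero f).2 fun v hv => ?_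
    have hG : Gmac (m + 2) *ᵥ (e v) = 0 := by
      rw [← conjTranspose_mul_self_mulVec_eq_zero, conjTranspose_eq_transpose_of_trivial]
      exact hv
    have h0 := eq_zero_of_Gmac_mulVec (m + 2) (e v) hG
      fun i j h => extend_interiorCell_boundary m v (i, j) (Or.inr (Or.inl h))
    ext x
    have := congrFun h0 (interiorCell m x)
    rwa [Function.ExtendByZero.linearMap_apply,
      (interiorCell_injective m).extend_apply] at this
  have hle := LinearMap.finrank_le_finrank_of_injective (f := f.codRestrict _ hmem)
    (fun v w h => hinj (congrArg Subtype.val h))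
  rw [Module.finrank_fintype_fun_eq_card, Fintype.card_prod, Fintype.card_fin] at hle
  refine le_trans (le_of_eq ?_) hle
  rw [Nat.sub_eq_iff_eq_add]
  · rw [Nat.add_succ_sub_one]
    ring
  · rw [Nat.add_succ_sub_one]
    nlinarith
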